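/- For every n ∈ ℕ₀ there exists a unique n-partition of c_α of the form c_α = z_1 z_2 z_3 ⋯; that is, there is a unique sequence (z_j)_{j∈ℕ} of words with z_j ∈ {s_{n−1}, s_n} for all j such that for every m the concatenation z_1 z_2 ⋯ z_m is a prefix of c_α. -/

import Mathlib

open scoped Classical

noncomputable section

/-- The Sturmian potential `v_{α,θ}(n) = χ_{[1-α,1)}(nα + θ mod 1)`. -/
def sturmian (α θ : ℝ) (n : ℤ) : ℝ :=
  if Int.fract (n * α + θ) ∈ Set.Ico (1 - α) 1 then 1 else 0

/-- Iterates of the Gauss map, starting at `α`. -/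
def cfGauss (α : ℝ) : ℕ → ℝ
  | 0 => α
  | n + 1 => Int.fract (cfGauss α n)⁻¹

/-- The continued fraction coefficients `a_n` of `α = [a_1, a_2, …]` (for `n ≥ 1`):
`a_1 = ⌊1/α⌋`, `a_2 = ⌊1/fract(1/α)⌋`, … . -/
def cfCoeff (α : ℝ) (n : ℕ) : ℕ := ⌊(cfGauss α (n - 1))⁻¹⌋₊

/-- The standard words, with an index shift: `sWord a n` is `s_{n-1}`.  Thus
`sWord a 0 = s_{-1} = 1`, `sWord a 1 = s_0 = 0`, `sWord a 2 = s_1 = 0^{a_1 - 1} 1`, and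
`sWord a (n+1) = s_n = s_{n-1}^{a_n} s_{n-2}` for `n ≥ 2`. -/
def sWord (a : ℕ → ℕ) : ℕ → List ℝ
  | 0 => [1]
  | 1 => [0]
  | 2 => List.replicate (a 1 - 1) (0 : ℝ) ++ [1]
  | n + 3 => (List.replicate (a (n + 2)) (sWord a (n + 2))).flatten ++ sWord a (n + 1)

/-- The `n`-th letter (for `n ≥ 1`) of the one-sided infinite word `c_α = lim s_n`:
since `|s_n| ≥ n`, it is the `n`-th letter of `s_n`. -/
def cword (α : ℝ) (n : ℕ) : ℝ := (sWord (cfCoeff α) (n + 1)).getD (n - 1) 0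

/-- `w` is a (finite) prefix of the one-sided infinite word `c_α`. -/
def IsPrefC (α : ℝ) (w : List ℝ) : Prop :=
  w = (List.range w.length).map fun i => cword α (i + 1)

/-- The one-step transfer matrix `T(λ,E,a) = [[E - λa, -1], [1, 0]]`. -/
def transferT (lam : ℝ) (E : ℂ) (a : ℝ) : Matrix (Fin 2) (Fin 2) ℂ :=
  !![E - lam * a, -1; 1, 0]

/-- The transfer matrix over a word `w = w_1 … w_n`:
`M(λ,E,w) = T(λ,E,w_n) ⋯ T(λ,E,w_1)`. -/
def transferM (lam : ℝ) (E : ℂ) : List ℝ → Matrix (Fin 2) (Fin 2) ℂ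
  | [] => 1
  | a :: w => transferM lam E w * transferT lam E a

/-- The operator norm on `ℂ²` (with the euclidean norm) of a `2 × 2` complex matrix. -/
def opNorm (A : Matrix (Fin 2) (Fin 2) ℂ) : ℝ :=
  ‖Matrix.toEuclideanCLM (𝕜 := ℂ) A‖

/-- The word `v_{α,θ}^n = v_{α,θ}(1) … v_{α,θ}(n)`. -/
def sturmianWord (α θ : ℝ) (n : ℕ) : List ℝ :=
  (List.range n).map fun k => sturmian α θ (k + 1)

/-- The set of finite nonempty subwords of a two-sided sequence `v : ℤ → ℝ`. -/
def SubZ (v : ℤ → ℝ) : Set (List ℝ) :=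
  {w | w ≠ [] ∧ ∃ k : ℤ, w = (List.range w.length).map fun i => v (k + i)}

/-- The set of finite nonempty subwords of the one-sided word `c_α` (indexed from `1`). -/
def SubC (α : ℝ) : Set (List ℝ) :=
  {w | w ≠ [] ∧ ∃ k : ℕ, 1 ≤ k ∧ w = (List.range w.length).map fun i => cword α (k + i)}

/-- `W_α`, the set of all finite nonempty subwords of the sequences `v_{α,θ}`, `θ ∈ [0,1)`. -/
def Walpha (α : ℝ) : Set (List ℝ) :=
  {w | ∃ θ ∈ Set.Ico (0 : ℝ) 1, w ∈ SubZ (sturmian α θ)}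

/-- `α` is a bounded density number: `limsup_{n→∞} (1/n) ∑_{j=1}^n a_j < ∞` for the
continued fraction coefficients `a_j` of `α`. -/
def BoundedDensity (α : ℝ) : Prop :=
  Filter.IsBoundedUnder (· ≤ ·) Filter.atTop
    (fun n : ℕ => (1 / n : ℝ) * ∑ j ∈ Finset.Icc 1 n, (cfCoeff α j : ℝ))

end

/-!
Let `u` and `v` be words that do not commute. Two infinite products of `u`s and `v`s, one starting
with `u` and the other with `v`, never agree: if both are prefixed by the shorter word `u`, write
`v = u ++ w`, cancel `u`, and compare the resulting products of `u`s and `w`s; this is Euclid's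
algorithm on the lengths. Hence an infinite word has at most one factorization into `u`s and `v`s,
and by the pigeonhole principle it has one as soon as infinitely many of its prefixes do.
Both criteria hold for `c_α`: as `s_n` is a power of `s_{n-1}` followed by `s_{n-2}`, it commutes
with `s_{n-1}` only if `s_{n-2}` does, and every later standard word is at once a product of
`s_{n-1}`s and `s_n`s and a prefix of `c_α`.
-/

open scoped Computability
open Filter

section InfiniteWords

variable {A : Type*}

/-- The finite word `w` is a prefix of the infinite word `x`. -/
def IsWordPrefix (w : List A) (x : Stream' A) : Prop :=
  w = x.take w.length

/-- The sequence of blocks `z` factors the infinite word `x` over the language `L`: every block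
lies in `L` and every finite concatenation `z 0 ++ ⋯ ++ z (m - 1)` is a prefix of `x`. (If all but
finitely many blocks are empty, the concatenations need not exhaust `x`.) -/
def IsFactorization (L : Language A) (x : Stream' A) (z : ℕ → List A) : Prop :=
  (∀ j, z j ∈ L) ∧ ∀ m, IsWordPrefix ((List.range m).map z).flatten x

theorem flatten_map_range_succ (z : ℕ → List A) (m : ℕ) :
    ((List.range (m + 1)).map z).flatten =
      z 0 ++ ((List.range m).map (z ∘ Nat.succ)).flatten := by
  simp [List.range_succ_eq_map]

theorem length_le_length_flatten {l : List (List A)} (hl : [] ∉ l) :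
    l.length ≤ l.flatten.length := by
  rw [List.length_flatten, ← List.length_map (f := List.length)]
  refine List.length_le_sum_of_one_le _ (List.forall_mem_map.mpr fun w hw ↦ ?_)
  exact List.length_pos_iff.mpr (ne_of_mem_of_not_mem hw hl)

theorem flatten_replicate_append_comm (w : List A) (k : ℕ) :
    (List.replicate k w).flatten ++ w = w ++ (List.replicate k w).flatten := by
  rw [← List.flatten_concat, ← List.replicate_succ', List.replicate_succ, List.flatten_cons]

theorem isWordPrefix_nil (x : Stream' A) : IsWordPrefix [] x := rfl

theorem isWordPrefix_take (x : Stream' A) (N : ℕ) : IsWordPrefix (x.take N) x := by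
  rw [IsWordPrefix, Stream'.length_take]

theorem isWordPrefix_append_iff {v w : List A} {x : Stream' A} :
    IsWordPrefix (v ++ w) x ↔ IsWordPrefix v x ∧ IsWordPrefix w (x.drop v.length) := by
  simp only [IsWordPrefix, List.length_append, Stream'.take_add]
  exact List.append_eq_append_iff_of_size_eq_left (Stream'.length_take _ _).symm

theorem IsWordPrefix.prefix_of_length_le {v w : List A} {x : Stream' A} (hv : IsWordPrefix v x)
    (hw : IsWordPrefix w x) (h : v.length ≤ w.length) : v <+: w := by
  rw [hv, hw]
  exact Stream'.take_prefix_take_left _ _ _ h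

/-- The infinite word whose `i`-th letter is the `i`-th letter of `s i`; it is the limit of the
words `s i` if these are successive prefixes of each other with `i < (s i).length`. The letter `d`
is a placeholder for positions past the end. -/
def diagonal (s : ℕ → List A) (d : A) : Stream' A :=
  fun i ↦ (s i).getD i d

theorem isWordPrefix_diagonal {s : ℕ → List A} (hs : ∀ n, s n <+: s (n + 1))
    (hlen : ∀ n, n < (s n).length) (d : A) (n : ℕ) :
    IsWordPrefix (s n) (diagonal s d) := by
  have hmono {i j : ℕ} (hij : i ≤ j) : s i <+: s j :=
    Nat.rel_of_forall_rel_succ_of_le (· <+: ·) hs hij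
  refine List.ext_getElem (Stream'.length_take _ _).symm fun i hi _ ↦ ?_
  rw [Stream'.take_get]
  refine Eq.trans ?_ (List.getD_eq_getElem _ d (hlen i)).symm
  rcases le_total n i with h | h
  · exact (hmono h).getElem hi
  · exact ((hmono h).getElem (hlen i)).symm

section Existence

variable {L : Language A} {x : Stream' A}

theorem exists_isFactorization_of_step {P : Stream' A → Prop}
    (step : ∀ x, P x → ∃ b ∈ L, IsWordPrefix b x ∧ P (x.drop b.length)) (hx : P x) :
    ∃ z, IsFactorization L x z := by
  choose b hbL hbx hbP using fun y : {y // P y} ↦ step y y.2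
  let next (y : {y // P y}) : {y // P y} := ⟨y.1.drop (b y).length, hbP y⟩
  have isWordPrefix (m : ℕ) : ∀ y : {y // P y},
      IsWordPrefix ((List.range m).map fun j ↦ b (next^[j] y)).flatten y.1 := by
    induction m with
    | zero => exact fun y ↦ isWordPrefix_nil _
    | succ m ih =>
      intro y
      rw [flatten_map_range_succ, isWordPrefix_append_iff]
      exact ⟨hbx y, ih (next y)⟩
  exact ⟨fun j ↦ b (next^[j] ⟨x, hx⟩), fun _ ↦ hbL _, fun m ↦ isWordPrefix m ⟨x, hx⟩⟩

theorem exists_append_eq_of_mem_kstar {w : List A} (hw : w ∈ L∗) (hne : w ≠ []) :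
    ∃ b ∈ L, ∃ y ∈ L∗, b ++ y = w := by
  rw [← one_add_mul_kstar, Language.mem_add, Language.mem_one] at hw
  exact Language.mem_mul.mp (hw.resolve_left hne)

theorem exists_block_of_frequently_take_mem_kstar (hL : Set.Finite (α := List A) L)
    (hx : ∃ᶠ N in atTop, x.take N ∈ L∗) :
    ∃ b ∈ L, IsWordPrefix b x ∧ ∃ᶠ N in atTop, (x.drop b.length).take N ∈ L∗ := by
  have hsplit : ∃ᶠ N in atTop, ∃ b ∈ L, ∃ y ∈ L∗, b ++ y = x.take N := by
    refine (hx.and_eventually (eventually_ge_atTop 1)).mono fun N ⟨hN, hpos⟩ ↦ ?_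
    exact exists_append_eq_of_mem_kstar hN (List.length_pos_iff.mp (by rwa [Stream'.length_take]))
  obtain ⟨b, hb, hfreq⟩ := (frequently_exists_finite hL).mp hsplit
  have htake {N : ℕ} {y : List A} (h : b ++ y = x.take N) :
      IsWordPrefix b x ∧ IsWordPrefix y (x.drop b.length) :=
    isWordPrefix_append_iff.mp (h ▸ isWordPrefix_take x N)
  obtain ⟨N, y, -, hy⟩ := hfreq.exists
  refine ⟨b, hb, (htake hy).1, (tendsto_sub_atTop_nat b.length).frequently ?_⟩
  refine hfreq.mono fun N ⟨y, hyL, hy⟩ ↦ ?_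
  have hlen : y.length = N - b.length := by
    rw [← x.length_take N, ← hy, List.length_append, Nat.add_sub_cancel_left]
  rwa [← hlen, ← (htake hy).2]

theorem exists_isFactorization (hL : Set.Finite (α := List A) L)
    (hx : ∃ᶠ N in atTop, x.take N ∈ L∗) : ∃ z, IsFactorization L x z :=
  exists_isFactorization_of_step (fun _ ↦ exists_block_of_frequently_take_mem_kstar hL) hx

end Existence

section Uniqueness

theorem kstar_pair_append_le (u w : List A) :
    ({u, u ++ w} : Language A)∗ ≤ ({u, w} : Language A)∗ := by
  have hle : ({u, w} : Language A) ≤ ({u, w} : Language A)∗ := le_kstar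
  rw [← kstar_idem ({u, w} : Language A)]
  refine kstar_mono ?_
  rintro _ (rfl | rfl)
  · exact hle (.inl rfl)
  · rw [← kstar_mul_kstar]
    exact Language.append_mem_mul (hle (.inl rfl)) (hle (.inr rfl))

theorem exists_append_of_mem_kstar_pair_append {u w p : List A}
    (hp : p ∈ ({u, u ++ w} : Language A)∗) (hne : p ≠ []) :
    ∃ y ∈ ({u, w} : Language A)∗, p = u ++ y := by
  obtain ⟨b, hb, y, hy, rfl⟩ := exists_append_eq_of_mem_kstar hp hne
  have hy' := kstar_pair_append_le u w hy
  rcases hb with rfl | rfl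
  · exact ⟨y, hy', rfl⟩
  · have hle : ({u, w} : Language A) * ({u, w} : Language A)∗ ≤ ({u, w} : Language A)∗ :=
      mul_kstar_le_kstar
    exact ⟨w ++ y, hle (Language.append_mem_mul (.inr rfl) hy'), List.append_assoc ..⟩

theorem append_comm_of_isWordPrefix {u v p q : List A} {x : Stream' A}
    (hp : p ∈ ({u, v} : Language A)∗) (hq : q ∈ ({u, v} : Language A)∗)
    (hup : IsWordPrefix (u ++ p) x) (hvq : IsWordPrefix (v ++ q) x)
    (hplen : v.length ≤ p.length) (hqlen : u.length ≤ q.length) :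
    u ++ v = v ++ u := by
  induction hN : u.length + v.length using Nat.strong_induction_on
    generalizing u v p q x with
  | _ N ih =>
  wlog huv : u.length ≤ v.length generalizing u v p q
  · have hcomm : ({u, v} : Language A) = {v, u} := Set.pair_comm u v
    rw [hcomm] at hp hq
    exact (this hq hp hvq hup hqlen hplen (by omega) (by omega)).symm
  obtain ⟨hu, hpu⟩ := isWordPrefix_append_iff.mp hup
  have hv := (isWordPrefix_append_iff.mp hvq).1
  obtain ⟨w, rfl⟩ := hu.prefix_of_length_le hv huv
  rw [List.append_assoc, isWordPrefix_append_iff] at hvq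
  rcases eq_or_ne u [] with rfl | hune
  · simp
  rcases eq_or_ne p [] with rfl | hpne
  · simp_all
  obtain ⟨y, hy, rfl⟩ := exists_append_of_mem_kstar_pair_append hp hpne
  have hupos := List.length_pos_iff.mpr hune
  simp only [List.length_append] at hplen hN
  rw [List.append_assoc, ih (u.length + w.length) (by omega) hy (kstar_pair_append_le u w hq)
    hpu hvq.2 (by omega) hqlen rfl]

theorem IsFactorization.tail {L : Language A} {x : Stream' A} {z : ℕ → List A}
    (hz : IsFactorization L x z) : IsFactorization L (x.drop (z 0).length) (z ∘ Nat.succ) := by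
  refine ⟨fun j ↦ hz.1 (j + 1), fun m ↦ ?_⟩
  have h := hz.2 (m + 1)
  rw [flatten_map_range_succ] at h
  exact (isWordPrefix_append_iff.mp h).2

theorem flatten_mem_kstar_of_forall_mem {L : Language A} {z : ℕ → List A} (hz : ∀ j, z j ∈ L)
    (m : ℕ) : ((List.range m).map z).flatten ∈ L∗ :=
  Language.join_mem_kstar (List.forall_mem_map.mpr fun j _ ↦ hz j)

variable {u v : List A} {x : Stream' A} {z z' : ℕ → List A}

theorem append_comm_of_isFactorization (hz : IsFactorization {u, v} x z)
    (hz' : IsFactorization {u, v} x z') (h : z 0 = u) (h' : z' 0 = v) : u ++ v = v ++ u := by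
  rcases eq_or_ne u [] with rfl | hu
  · simp
  rcases eq_or_ne v [] with rfl | hv
  · simp
  set m := u.length + v.length
  have length_ge {y : ℕ → List A} (hy : ∀ j, y j ∈ ({u, v} : Language A)) :
      m ≤ ((List.range m).map y).flatten.length := by
    refine le_of_eq_of_le (by simp) (length_le_length_flatten fun hmem ↦ ?_)
    obtain ⟨j, -, hj⟩ := List.mem_map.mp hmem
    rcases hy j with hj' | hj'
    · exact hu (hj' ▸ hj)
    · exact hv (hj' ▸ hj)
  have hp := hz.2 (m + 1)
  have hq := hz'.2 (m + 1)
  rw [flatten_map_range_succ, h] at hp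
  rw [flatten_map_range_succ, h'] at hq
  exact append_comm_of_isWordPrefix
    (flatten_mem_kstar_of_forall_mem hz.tail.1 m) (flatten_mem_kstar_of_forall_mem hz'.tail.1 m)
    hp hq ((Nat.le_add_left ..).trans (length_ge hz.tail.1))
    ((Nat.le_add_right ..).trans (length_ge hz'.tail.1))

theorem IsFactorization.head_eq (huv : u ++ v ≠ v ++ u) (hz : IsFactorization {u, v} x z)
    (hz' : IsFactorization {u, v} x z') : z 0 = z' 0 := by
  rcases hz.1 0 with h | h <;> rcases hz'.1 0 with h' | h'
  · exact h.trans h'.symm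
  · exact absurd (append_comm_of_isFactorization hz hz' h h') huv
  · exact absurd (append_comm_of_isFactorization hz' hz h' h) huv
  · exact h.trans h'.symm

theorem IsFactorization.unique (huv : u ++ v ≠ v ++ u) (hz : IsFactorization {u, v} x z)
    (hz' : IsFactorization {u, v} x z') : z = z' := by
  funext j
  induction j generalizing x z z' with
  | zero => exact hz.head_eq huv hz'
  | succ _ ih => exact ih hz.tail (hz.head_eq huv hz' ▸ hz'.tail)

theorem existsUnique_isFactorization (huv : u ++ v ≠ v ++ u)
    (hx : ∃ᶠ N in atTop, x.take N ∈ ({u, v} : Language A)∗) :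
    ∃! z, IsFactorization {u, v} x z := by
  obtain ⟨z, hz⟩ := exists_isFactorization ((Set.finite_singleton v).insert u) hx
  exact ⟨z, hz, fun z' hz' ↦ hz'.unique huv hz⟩

end Uniqueness

end InfiniteWords

section StandardWords

variable (a : ℕ → ℕ)

theorem exists_sWord_add_two (n : ℕ) :
    ∃ k, sWord a (n + 2) = (List.replicate k (sWord a (n + 1))).flatten ++ sWord a n := by
  cases n with
  | zero => exact ⟨a 1 - 1, by simp [sWord]⟩
  | succ n => exact ⟨a (n + 2), by rw [sWord]⟩

theorem sWord_append_ne (n : ℕ) :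
    sWord a n ++ sWord a (n + 1) ≠ sWord a (n + 1) ++ sWord a n := by
  induction n with
  | zero => simp [sWord]
  | succ n ih =>
    obtain ⟨k, hk⟩ := exists_sWord_add_two a n
    rw [hk, ← List.append_assoc, ← flatten_replicate_append_comm, List.append_assoc,
      List.append_assoc, ne_eq, List.append_cancel_left_eq]
    exact ih.symm

theorem sWord_ne_nil (n : ℕ) : sWord a n ≠ [] := by
  intro h
  simpa [h] using sWord_append_ne a n

theorem sWord_add_mem_kstar (n k : ℕ) :
    sWord a (n + k) ∈ ({sWord a n, sWord a (n + 1)} : Language ℝ)∗ := by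
  set L : Language ℝ := {sWord a n, sWord a (n + 1)}
  have hle : L ≤ L∗ := le_kstar
  induction k using Nat.twoStepInduction with
  | zero => exact hle (.inl rfl)
  | one => exact hle (.inr rfl)
  | more k ih₀ ih₁ =>
    obtain ⟨m, hm⟩ := exists_sWord_add_two a (n + k)
    rw [← add_assoc, hm, ← kstar_mul_kstar]
    refine Language.append_mem_mul ?_ ih₀
    rw [← kstar_idem L]
    exact Language.join_mem_kstar fun y hy ↦ List.eq_of_mem_replicate hy ▸ ih₁

variable {a}

theorem exists_sWord_add_three (ha : ∀ k, 0 < a k) (n : ℕ) :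
    ∃ y, sWord a (n + 3) = sWord a (n + 2) ++ (y ++ sWord a (n + 1)) := by
  obtain ⟨k, hk⟩ := Nat.exists_eq_add_one.mpr (ha (n + 2))
  exact ⟨(List.replicate k (sWord a (n + 2))).flatten, by
    rw [sWord, hk, List.replicate_succ, List.flatten_cons, List.append_assoc]⟩

theorem sWord_prefix_succ (ha : ∀ k, 0 < a k) (n : ℕ) : sWord a (n + 2) <+: sWord a (n + 3) := by
  obtain ⟨y, hy⟩ := exists_sWord_add_three ha n
  exact ⟨_, hy.symm⟩

theorem lt_length_sWord (ha : ∀ k, 0 < a k) (n : ℕ) : n < (sWord a (n + 2)).length := by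
  induction n with
  | zero => exact List.length_pos_iff.mpr (sWord_ne_nil a 2)
  | succ n ih =>
    obtain ⟨y, hy⟩ := exists_sWord_add_three ha n
    have := List.length_pos_iff.mpr (sWord_ne_nil a (n + 1))
    rw [hy, List.length_append, List.length_append]
    omega

variable (a) in
/-- The infinite word `lim s_n` with coefficients `a`, indexed from `0`; for `a = cfCoeff α` it is
the word `c_α`, with `c_α(i)` at position `i - 1`. -/
def characteristicWord : Stream' ℝ :=
  diagonal (fun i ↦ sWord a (i + 2)) 0

theorem isWordPrefix_sWord (ha : ∀ k, 0 < a k) (n : ℕ) :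
    IsWordPrefix (sWord a (n + 2)) (characteristicWord a) :=
  isWordPrefix_diagonal (sWord_prefix_succ ha) (lt_length_sWord ha) 0 n

theorem frequently_take_characteristicWord_mem_kstar (ha : ∀ k, 0 < a k) (n : ℕ) :
    ∃ᶠ N in atTop,
      (characteristicWord a).take N ∈ ({sWord a n, sWord a (n + 1)} : Language ℝ)∗ := by
  refine frequently_atTop.mpr fun N ↦ ⟨(sWord a (n + N + 2)).length, ?_, ?_⟩
  · exact (Nat.le_add_left N n).trans (lt_length_sWord ha (n + N)).le
  · rw [← isWordPrefix_sWord ha (n + N)]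
    exact sWord_add_mem_kstar a n (N + 2)

end StandardWords

section ContinuedFraction

variable {α : ℝ}

theorem irrational_cfGauss (hirr : Irrational α) (k : ℕ) : Irrational (cfGauss α k) := by
  induction k with
  | zero => exact hirr
  | succ k ih => exact ih.inv.sub_intCast ⌊(cfGauss α k)⁻¹⌋

theorem cfGauss_mem_Ioo (hirr : Irrational α) (hα : α ∈ Set.Ioo (0 : ℝ) 1) (k : ℕ) :
    cfGauss α k ∈ Set.Ioo (0 : ℝ) 1 := by
  cases k with
  | zero => exact hα
  | succ k =>
    have hne : cfGauss α (k + 1) ≠ 0 := (irrational_cfGauss hirr (k + 1)).ne_zero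
    exact ⟨(Int.fract_nonneg _).lt_of_ne' hne, Int.fract_lt_one _⟩

theorem cfCoeff_pos (hirr : Irrational α) (hα : α ∈ Set.Ioo (0 : ℝ) 1) (k : ℕ) :
    0 < cfCoeff α k := by
  obtain ⟨hpos, hlt⟩ := cfGauss_mem_Ioo hirr hα (k - 1)
  exact Nat.floor_pos.mpr ((one_le_inv₀ hpos).mpr hlt.le)

end ContinuedFraction

theorem isPrefC_iff_isWordPrefix (α : ℝ) (w : List ℝ) :
    IsPrefC α w ↔ IsWordPrefix w (characteristicWord (cfCoeff α)) := by
  have htake (N : ℕ) : (List.range N).map (fun i ↦ cword α (i + 1)) =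
      (characteristicWord (cfCoeff α)).take N := by
    refine List.ext_getElem (by simp) fun i _ _ ↦ ?_
    rw [List.getElem_map, List.getElem_range, Stream'.take_get]
    rfl
  rw [IsPrefC, IsWordPrefix, htake]

theorem unique_n_partition_of_c
    (α : ℝ) (hirr : Irrational α) (hα : α ∈ Set.Ioo (0 : ℝ) 1) (n : ℕ) :
    ∃! z : ℕ → List ℝ,
      (∀ j : ℕ, z j = sWord (cfCoeff α) n ∨ z j = sWord (cfCoeff α) (n + 1)) ∧
      ∀ m : ℕ, IsPrefC α ((List.range m).map z).flatten := by
  simp only [isPrefC_iff_isWordPrefix]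
  have ha := cfCoeff_pos hirr hα
  exact existsUnique_isFactorization (sWord_append_ne (cfCoeff α) n)
    (frequently_take_characteristicWord_mem_kstar ha n)
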